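/- Let G = (V, E) be a finite simple graph with distinguished vertices a = v₁ and b = vₙ, n = |V|, and let Net(G) be the associated LDC network. In every feasible switching solution of Net(G), the sum of the flow from g to l on the line ({g,l}, 1, 1/(n+1)) and the flow from b to l on the line ({b,l}, 1, 1) is strictly greater than 1; consequently the line ({g,l}, 1, 1/(n+1)) is never switched off, and in the subgraph of G consisting of the non-switched lines there is at least one path from a to b. -/

import Mathlib

open scoped BigOperators ENNReal Classical

/-- A Linear DC (LDC) power network on the finite bus type `V`.
`adj a b` states that there is a line between buses `a` and `b` (it is meant to be
symmetric); `cap`/`sus` give the capacity and susceptance of that line; `pmin`/`pmax`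
are the minimum/maximum demand, `gmax` is the maximum generation (`⊤` meaning
unbounded) and `cost` is the generation cost. -/
structure LDCNetwork (V : Type*) [Fintype V] where
  adj : V → V → Prop
  cap : V → V → ℝ
  sus : V → V → ℝ
  pmin : V → ℝ
  pmax : V → ℝ≥0∞
  gmax : V → ℝ≥0∞
  cost : V → ℝ

/-- A candidate switching solution: the set of switched-off lines (as a relation on
buses), the phase angles `theta`, the generation `gen` and the served demand `dem`. -/
structure LDCSolution (V : Type*) [Fintype V] where
  switched : V → V → Prop
  theta : V → ℝ
  gen : V → ℝ
  dem : V → ℝ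

/-- Feasibility of a switching solution `S` for the network `N`: switched-off lines are
lines of the network and switching is symmetric; the flow `sus·(θ a - θ b)` of every
non-switched line is within its capacity; the demand and generation bounds hold; and
Kirchhoff's conservation law holds at every bus. -/
def LDCSolution.IsFeasible {V : Type*} [Fintype V] (S : LDCSolution V)
    (N : LDCNetwork V) : Prop :=
  (∀ a b, S.switched a b → N.adj a b) ∧
  (∀ a b, S.switched a b → S.switched b a) ∧
  (∀ a b, N.adj a b → ¬ S.switched a b →
      |N.sus a b * (S.theta a - S.theta b)| ≤ N.cap a b) ∧
  (∀ v, N.pmin v ≤ S.dem v ∧ 0 ≤ S.dem v ∧ ENNReal.ofReal (S.dem v) ≤ N.pmax v) ∧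
  (∀ v, 0 ≤ S.gen v ∧ ENNReal.ofReal (S.gen v) ≤ N.gmax v) ∧
  (∀ v, (∑ b : V, if N.adj v b ∧ ¬ S.switched v b
          then N.sus v b * (S.theta v - S.theta b) else 0) = S.gen v - S.dem v)

/-- Build an LDC network from a one-directional line specification:
`spec p q = some (c, s)` means that there is a line between buses `p` and `q`
with capacity `c` and susceptance `s`. -/
noncomputable def mkNet {V : Type*} [Fintype V] (spec : V → V → Option (ℝ × ℝ))
    (pmin : V → ℝ) (pmax gmax : V → ℝ≥0∞) (cost : V → ℝ) : LDCNetwork V where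
  adj a b := (spec a b).isSome ∨ (spec b a).isSome
  cap a b := ((spec a b).map Prod.fst).getD (((spec b a).map Prod.fst).getD 0)
  sus a b := ((spec a b).map Prod.snd).getD (((spec b a).map Prod.snd).getD 0)
  pmin := pmin
  pmax := pmax
  gmax := gmax
  cost := cost

/-- Buses of the network `Net(G)` associated with a graph `G` on vertex set `V`:
the vertices of `G` together with the generators `g` (`ABus.g`), `g'` (`ABus.gp`) and
the loads `l` (`ABus.l`), `l'` (`ABus.lp`). -/
inductive ABus (V : Type*) where
  | vert : V → ABus V
  | g : ABus V
  | l : ABus V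
  | gp : ABus V
  | lp : ABus V
  deriving DecidableEq, Fintype

/-- The lines of `Net(G)` where `a` and `b` are the distinguished vertices and
`n = |V|`: a line `({u,v}, 1, 1)` for every edge `{u,v}` of `G`, together with
`({g,a}, 1, 1)`, `({b,l}, 1, 1)`, `({g,l}, 1, 1/(n+1))`, `({g',l'}, n, n)`,
`({g',l}, 1, 1)` and `({l',l}, 1, 1)`. -/
noncomputable def graphSpec {V : Type*} [Fintype V] (G : SimpleGraph V) (a b : V) :
    ABus V → ABus V → Option (ℝ × ℝ) := fun p q =>
  let n : ℝ := Fintype.card V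
  match p, q with
  | .vert u, .vert v => if G.Adj u v then some (1, 1) else none
  | .g, .vert v => if v = a then some (1, 1) else none
  | .vert v, .l => if v = b then some (1, 1) else none
  | .g, .l => some (1, 1 / (n + 1))
  | .gp, .lp => some (n, n)
  | .gp, .l => some (1, 1)
  | .lp, .l => some (1, 1)
  | _, _ => none

/-- The network `Net(G)`: `g⁺(g) = g⁺(g') = ⊤`, `p⁺(l) = p⁺(l') = ⊤`, `p⁻(l) = 3`;
all other bounds are `0`. -/
noncomputable def graphNet {V : Type*} [Fintype V] (G : SimpleGraph V) (a b : V) :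
    LDCNetwork (ABus V) :=
  mkNet (graphSpec G a b)
    (fun p => match p with
      | .l => 3
      | _ => 0)
    (fun p => match p with
      | .l => ⊤
      | .lp => ⊤
      | _ => 0)
    (fun p => match p with
      | .g => ⊤
      | .gp => ⊤
      | _ => 0)
    (fun _ => 0)

/-!
The buses `l` and `l'` have no generation. The load `l` consumes at least `3` and is fed by the
four lines from `g`, `b`, `g'` and `l'`, each of capacity `1`. The lines from `g'` and `l'` cannot
both be saturated: that would force `θ(g') = θ(l')`, so that nothing flows from `g'` to `l'`, and
`l'` would have no power to pass on. Hence `g` and `b` together deliver more than `1`, and each of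
them delivers a positive amount. If `a` could not reach `b`, then the set of vertices not
reachable from `a` would send power to `l` through `b` with neither generation nor inflow.
-/

namespace LDCNetwork

variable {B : Type*} [Fintype B]

/-- Lines are unordered pairs of buses: adjacency and susceptance do not depend on the order of
the two ends of a line. -/
structure IsSymm (N : LDCNetwork B) : Prop where
  adj_comm : ∀ p q, N.adj p q ↔ N.adj q p
  sus_comm : ∀ p q, N.sus p q = N.sus q p

end LDCNetwork

namespace LDCSolution

variable {B : Type*} [Fintype B] {S : LDCSolution B} {N : LDCNetwork B} {p q : B}

/-- The flow from `p` to `q`, set to `0` when there is no line between `p` and `q` or when that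
line is switched off. -/
noncomputable def flow (S : LDCSolution B) (N : LDCNetwork B) (p q : B) : ℝ :=
  if N.adj p q ∧ ¬ S.switched p q then N.sus p q * (S.theta p - S.theta q) else 0

lemma flow_of_adj (h : N.adj p q) :
    S.flow N p q = if ¬ S.switched p q then N.sus p q * (S.theta p - S.theta q) else 0 := by
  simp only [flow, h, true_and]

lemma adj_and_not_switched_of_flow_ne_zero (h : S.flow N p q ≠ 0) :
    N.adj p q ∧ ¬ S.switched p q :=
  of_not_not fun hpq => h (if_neg hpq)

lemma flow_eq_of_ne_zero (h : S.flow N p q ≠ 0) :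
    S.flow N p q = N.sus p q * (S.theta p - S.theta q) :=
  if_pos (adj_and_not_switched_of_flow_ne_zero h)

lemma flow_eq_zero_of_theta_eq (h : S.theta p = S.theta q) : S.flow N p q = 0 := by
  simp only [flow, h, sub_self, mul_zero, ite_self]

namespace IsFeasible

lemma switched_comm (hS : S.IsFeasible N) (p q : B) : S.switched p q ↔ S.switched q p :=
  ⟨hS.2.1 p q, hS.2.1 q p⟩

lemma pmin_le_dem (hS : S.IsFeasible N) (p : B) : N.pmin p ≤ S.dem p :=
  (hS.2.2.2.1 p).1

lemma dem_nonneg (hS : S.IsFeasible N) (p : B) : 0 ≤ S.dem p :=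
  (hS.2.2.2.1 p).2.1

lemma gen_eq_zero (hS : S.IsFeasible N) (h : N.gmax p = 0) : S.gen p = 0 := by
  obtain ⟨gen_nonneg, gen_le⟩ := hS.2.2.2.2.1 p
  rw [h, nonpos_iff_eq_zero, ENNReal.ofReal_eq_zero] at gen_le
  exact gen_le.antisymm gen_nonneg

lemma abs_flow_le_cap (hS : S.IsFeasible N) (hcap : 0 ≤ N.cap p q) :
    |S.flow N p q| ≤ N.cap p q := by
  unfold flow
  split_ifs with hon
  · exact hS.2.2.1 p q hon.1 hon.2
  · rwa [abs_zero]

lemma sum_flow (hS : S.IsFeasible N) (p : B) : ∑ q, S.flow N p q = S.gen p - S.dem p :=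
  hS.2.2.2.2.2 p

lemma sum_flow_of_neighbors_subset (hS : S.IsFeasible N) {s : Finset B}
    (hs : ∀ q, N.adj p q → q ∈ s) : ∑ q ∈ s, S.flow N p q = S.gen p - S.dem p := by
  rw [← hS.sum_flow p]
  refine Finset.sum_subset s.subset_univ fun q _ hq => ?_
  contrapose! hq
  exact hs q (adj_and_not_switched_of_flow_ne_zero hq).1

lemma flow_eq_neg (hS : S.IsFeasible N) (hN : N.IsSymm) (p q : B) :
    S.flow N p q = -S.flow N q p := by
  simp only [flow, hN.adj_comm p q, hN.sus_comm p q, hS.switched_comm p q]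
  split_ifs <;> ring

lemma sum_sum_flow_eq_zero (hS : S.IsFeasible N) (hN : N.IsSymm) (s : Finset B) :
    ∑ p ∈ s, ∑ q ∈ s, S.flow N p q = 0 := by
  refine self_eq_neg.mp ?_
  calc ∑ p ∈ s, ∑ q ∈ s, S.flow N p q
      = ∑ q ∈ s, ∑ p ∈ s, S.flow N p q := Finset.sum_comm
    _ = -∑ q ∈ s, ∑ p ∈ s, S.flow N q p := by
      simp only [← Finset.sum_neg_distrib, ← hS.flow_eq_neg hN]

lemma sum_sum_compl_flow (hS : S.IsFeasible N) (hN : N.IsSymm) (s : Finset B) :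
    ∑ p ∈ s, ∑ q ∈ sᶜ, S.flow N p q = ∑ p ∈ s, S.gen p - ∑ p ∈ s, S.dem p :=
  calc ∑ p ∈ s, ∑ q ∈ sᶜ, S.flow N p q
      = ∑ p ∈ s, ∑ q ∈ s, S.flow N p q + ∑ p ∈ s, ∑ q ∈ sᶜ, S.flow N p q := by
        rw [hS.sum_sum_flow_eq_zero hN, zero_add]
    _ = ∑ p ∈ s, (S.gen p - S.dem p) := by
        simp only [← Finset.sum_add_distrib, Finset.sum_add_sum_compl, hS.sum_flow]
    _ = ∑ p ∈ s, S.gen p - ∑ p ∈ s, S.dem p := Finset.sum_sub_distrib ..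

lemma exists_flow_neg_of_sum_gen_le_sum_dem (hS : S.IsFeasible N) (hN : N.IsSymm) {s : Finset B}
    (hs : ∑ p ∈ s, S.gen p ≤ ∑ p ∈ s, S.dem p) (hp : p ∈ s) (hq : q ∉ s)
    (hpq : 0 < S.flow N p q) : ∃ u ∈ s, ∃ v ∉ s, S.flow N u v < 0 := by
  by_contra! hout
  have hout' : ∀ u ∈ s, ∀ v ∈ sᶜ, 0 ≤ S.flow N u v := fun u hu v hv =>
    hout u hu v (Finset.mem_compl.mp hv)
  have outflow_pos : 0 < ∑ u ∈ s, ∑ v ∈ sᶜ, S.flow N u v :=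
    Finset.sum_pos' (fun u hu => Finset.sum_nonneg (hout' u hu))
      ⟨p, hp, Finset.sum_pos' (hout' p hp) ⟨q, Finset.mem_compl.mpr hq, hpq⟩⟩
  rw [hS.sum_sum_compl_flow hN] at outflow_pos
  linarith

end IsFeasible

end LDCSolution

lemma mkNet_isSymm {B : Type*} [Fintype B] {spec : B → B → Option (ℝ × ℝ)}
    (hspec : ∀ p q, ∀ x ∈ spec p q, ∀ y ∈ spec q p, x = y)
    (pmin : B → ℝ) (pmax gmax : B → ℝ≥0∞) (cost : B → ℝ) :
    (mkNet spec pmin pmax gmax cost).IsSymm where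
  adj_comm _ _ := or_comm
  sus_comm p q := by
    have := hspec p q
    cases hpq : spec p q <;> cases hqp : spec q p <;> simp_all [mkNet]

section GraphNet

variable {V : Type*} [Fintype V] {G : SimpleGraph V} {a b : V}

lemma graphNet_isSymm : (graphNet G a b).IsSymm := by
  refine mkNet_isSymm (fun p q x hx y hy => ?_) _ _ _ _
  cases p <;> cases q <;> simp_all [graphSpec]

lemma graphNet_adj_vert_iff {u : V} {q : ABus V} :
    (graphNet G a b).adj (.vert u) q ↔
      (∃ v, G.Adj u v ∧ q = .vert v) ∨ (u = a ∧ q = .g) ∨ (u = b ∧ q = .l) := by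
  cases q <;> simp [graphNet, mkNet, graphSpec, G.adj_comm]

lemma graphNet_adj_l_iff {q : ABus V} :
    (graphNet G a b).adj .l q ↔ q = .vert b ∨ q = .g ∨ q = .gp ∨ q = .lp := by
  cases q <;> simp [graphNet, mkNet, graphSpec]

lemma graphNet_adj_lp_iff {q : ABus V} :
    (graphNet G a b).adj .lp q ↔ q = .gp ∨ q = .l := by
  cases q <;> simp [graphNet, mkNet, graphSpec]

lemma graphNet_cap_l_mem_Icc (p : ABus V) : (graphNet G a b).cap p .l ∈ Set.Icc 0 1 := by
  cases p with
  | vert v => by_cases hv : v = b <;> simp [graphNet, mkNet, graphSpec, hv]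
  | _ => simp [graphNet, mkNet, graphSpec]

lemma graphNet_sus_gp_l : (graphNet G a b).sus .gp .l = 1 := by
  simp [graphNet, mkNet, graphSpec]

lemma graphNet_sus_lp_l : (graphNet G a b).sus .lp .l = 1 := by
  simp [graphNet, mkNet, graphSpec]

namespace LDCSolution.IsFeasible

variable {S : LDCSolution (ABus V)}

lemma graphNet_flow_l_le_one (hS : S.IsFeasible (graphNet G a b)) (p : ABus V) :
    S.flow (graphNet G a b) p .l ≤ 1 := by
  obtain ⟨cap_nonneg, cap_le⟩ := graphNet_cap_l_mem_Icc (G := G) (a := a) (b := b) p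
  exact (le_abs_self _).trans ((hS.abs_flow_le_cap cap_nonneg).trans cap_le)

lemma graphNet_flow_lp_gp_add_flow_lp_l_nonpos (hS : S.IsFeasible (graphNet G a b)) :
    S.flow (graphNet G a b) .lp .gp + S.flow (graphNet G a b) .lp .l ≤ 0 := by
  have balance := hS.sum_flow_of_neighbors_subset (p := .lp) (s := {.gp, .l}) fun q hq => by
    simpa using graphNet_adj_lp_iff.mp hq
  rw [Finset.sum_pair (by simp), hS.gen_eq_zero rfl] at balance
  linarith [hS.dem_nonneg .lp]

lemma graphNet_three_le_sum_flow_l (hS : S.IsFeasible (graphNet G a b)) :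
    3 ≤ S.flow (graphNet G a b) .g .l + S.flow (graphNet G a b) (.vert b) .l +
      (S.flow (graphNet G a b) .gp .l + S.flow (graphNet G a b) .lp .l) := by
  have balance := hS.sum_flow_of_neighbors_subset (p := .l) (s := {.vert b, .g, .gp, .lp})
    fun q hq => by simpa using graphNet_adj_l_iff.mp hq
  have demand : 3 ≤ S.dem .l := hS.pmin_le_dem .l
  simp only [hS.flow_eq_neg graphNet_isSymm .l, hS.gen_eq_zero (p := .l) rfl, Finset.sum_insert,
    Finset.sum_singleton, Finset.mem_insert, Finset.mem_singleton, reduceCtorEq, or_self,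
    not_false_eq_true] at balance
  linarith

lemma graphNet_flow_gp_l_add_flow_lp_l_lt_two (hS : S.IsFeasible (graphNet G a b)) :
    S.flow (graphNet G a b) .gp .l + S.flow (graphNet G a b) .lp .l < 2 := by
  by_contra! hge
  have gp_le := hS.graphNet_flow_l_le_one .gp
  have lp_le := hS.graphNet_flow_l_le_one .lp
  have gp_drop : S.flow (graphNet G a b) .gp .l = S.theta .gp - S.theta .l := by
    rw [flow_eq_of_ne_zero (by linarith), graphNet_sus_gp_l, one_mul]
  have lp_drop : S.flow (graphNet G a b) .lp .l = S.theta .lp - S.theta .l := by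
    rw [flow_eq_of_ne_zero (by linarith), graphNet_sus_lp_l, one_mul]
  have theta_eq : S.theta .lp = S.theta .gp := by linarith
  have lp_gp_zero : S.flow (graphNet G a b) .lp .gp = 0 := flow_eq_zero_of_theta_eq theta_eq
  linarith [hS.graphNet_flow_lp_gp_add_flow_lp_l_nonpos]

lemma graphNet_one_lt_flow_g_l_add_flow_b_l (hS : S.IsFeasible (graphNet G a b)) :
    1 < S.flow (graphNet G a b) .g .l + S.flow (graphNet G a b) (.vert b) .l := by
  linarith [hS.graphNet_three_le_sum_flow_l, hS.graphNet_flow_gp_l_add_flow_lp_l_lt_two]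

lemma graphNet_reflTransGen_of_flow_b_l_pos (hS : S.IsFeasible (graphNet G a b))
    (hb : 0 < S.flow (graphNet G a b) (.vert b) .l) :
    Relation.ReflTransGen
      (fun u v : V => G.Adj u v ∧ ¬ S.switched (.vert u) (.vert v)) a b := by
  set Reached : V → Prop := Relation.ReflTransGen
    (fun u v : V => G.Adj u v ∧ ¬ S.switched (.vert u) (.vert v)) a
  by_contra hunreached
  let s : Finset (ABus V) := {p | ∃ v, ¬ Reached v ∧ p = .vert v}
  have gen_le_dem : ∑ p ∈ s, S.gen p ≤ ∑ p ∈ s, S.dem p := Finset.sum_le_sum fun p hp => by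
    obtain ⟨v, -, rfl⟩ := (Finset.mem_filter_univ p).mp hp
    exact (hS.gen_eq_zero rfl).trans_le (hS.dem_nonneg _)
  obtain ⟨p, hp, q, hq, hpq⟩ := hS.exists_flow_neg_of_sum_gen_le_sum_dem graphNet_isSymm
    gen_le_dem (p := .vert b) (q := .l) (by simpa [s] using hunreached) (by simp [s]) hb
  obtain ⟨u, hu, rfl⟩ := (Finset.mem_filter_univ p).mp hp
  obtain ⟨hadj, hon⟩ := adj_and_not_switched_of_flow_ne_zero hpq.ne
  rcases graphNet_adj_vert_iff.mp hadj with ⟨v, huv, rfl⟩ | ⟨rfl, rfl⟩ | ⟨rfl, rfl⟩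
  · have hv : Reached v := by simpa [s] using hq
    exact hu (hv.tail ⟨huv.symm, fun hoff => hon ((hS.switched_comm _ _).mp hoff)⟩)
  · exact hu .refl
  · exact hpq.not_gt hb

end LDCSolution.IsFeasible

end GraphNet

/-- In every feasible switching solution of `Net(G)`, the flow from
`g` to `l` plus the flow from `b` to `l` (a switched-off line carrying no flow) is
strictly greater than `1`; consequently the line `({g,l}, 1, 1/(n+1))` is never
switched off, and the subgraph of `G` consisting of the non-switched lines contains a
path from `a` to `b`. -/
theorem graphNet_flow_gt_one (V : Type*) [Fintype V] (G : SimpleGraph V)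
    (a b : V) (hab : a ≠ b)
    (S : LDCSolution (ABus V)) (hS : S.IsFeasible (graphNet G a b)) :
    1 < (if ¬ S.switched .g .l then
            (graphNet G a b).sus .g .l * (S.theta .g - S.theta .l) else 0) +
        (if ¬ S.switched (.vert b) .l then
            (graphNet G a b).sus (.vert b) .l * (S.theta (.vert b) - S.theta .l)
          else 0) ∧
    ¬ S.switched .g .l ∧
    Relation.ReflTransGen
      (fun u v : V => G.Adj u v ∧ ¬ S.switched (.vert u) (.vert v)) a b := by
  have adj_g : (graphNet G a b).adj .g .l :=
    (graphNet_isSymm.adj_comm _ _).mp (graphNet_adj_l_iff.mpr (.inr (.inl rfl)))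
  have adj_b : (graphNet G a b).adj (.vert b) .l :=
    graphNet_adj_vert_iff.mpr (.inr (.inr ⟨rfl, rfl⟩))
  rw [← LDCSolution.flow_of_adj adj_g, ← LDCSolution.flow_of_adj adj_b]
  have flow_gt := hS.graphNet_one_lt_flow_g_l_add_flow_b_l
  have g_pos : 0 < S.flow (graphNet G a b) .g .l := by
    linarith [hS.graphNet_flow_l_le_one (.vert b)]
  have b_pos : 0 < S.flow (graphNet G a b) (.vert b) .l := by
    linarith [hS.graphNet_flow_l_le_one .g]
  exact ⟨flow_gt, (LDCSolution.adj_and_not_switched_of_flow_ne_zero g_pos.ne').2,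
    hS.graphNet_reflTransGen_of_flow_b_l_pos b_pos⟩
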